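/- Let A = 𝔽₂[ω₁, ω₂, …] be the polynomial ring over 𝔽₂ on variables ω_n indexed by the positive integers, I ⊆ A the ideal generated by the squares ω_n² (n ≥ 1), π : A → A/I the quotient map, and Δ : A → A ⊗_{𝔽₂} A the Whitney-sum comultiplication. Then for any c ∈ A the following are equivalent: (i) c lies in the 𝔽₂-subalgebra of A generated by the squares {ω_n² : n ≥ 1}; (ii) (π ⊗ id)(Δ c) = 1 ⊗ c in (A/I) ⊗_{𝔽₂} A (i.e. c is complexifiable in the algebraic model). -/

import Mathlib

open MvPolynomial TensorProduct

noncomputable section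

/-- `𝔽₂`, the field with two elements. -/
abbrev F2 := ZMod 2

/-- `A = 𝔽₂[ω₁, ω₂, …]`, the polynomial ring on variables indexed by positive
integers, modelling `H^*(BO; ℤ/2)`. -/
abbrev A := MvPolynomial ℕ+ F2

/-- `ω_n` for `n : ℕ`, with the convention `ω₀ = 1`. -/
noncomputable def sw (n : ℕ) : A := if h : 0 < n then X (⟨n, h⟩ : ℕ+) else 1

/-- The Whitney-sum comultiplication `Δ : A → A ⊗ A`,
`Δ(ω_n) = Σ_{i+j=n} ω_i ⊗ ω_j`. -/
noncomputable def whitneyComul : A →ₐ[F2] A ⊗[F2] A :=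
  aeval fun n : ℕ+ =>
    ∑ i ∈ Finset.range ((n : ℕ) + 1), sw i ⊗ₜ[F2] sw ((n : ℕ) - i)

/-- The ideal `I ⊆ A` generated by the squares `ω_n²`. -/
noncomputable def sqIdeal : Ideal A := Ideal.span (Set.range fun n : ℕ+ => (X n : A) ^ 2)

/-- The quotient map `π : A → A/I` as an algebra homomorphism. -/
noncomputable def qmap : A →ₐ[F2] A ⧸ sqIdeal := Ideal.Quotient.mkₐ F2 sqIdeal

abbrev DA := TrivSqZeroExt A A

/-- The point derivation dual to `ω_n`, as a map into dual numbers over `A`. -/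
noncomputable def theta (n : ℕ+) : A →ₐ[F2] DA :=
  aeval fun m => if m = n then TrivSqZeroExt.inr 1 else 0

lemma theta_vanish (n : ℕ+) : ∀ a ∈ sqIdeal, theta n a = 0 := by
  intro a ha
  have : sqIdeal ≤ RingHom.ker (theta n) := by
    refine Ideal.span_le.2 ?_
    rintro _ ⟨m, rfl⟩
    simp only [SetLike.mem_coe, RingHom.mem_ker, map_pow, theta, aeval_X]
    split_ifs
    · rw [pow_two, TrivSqZeroExt.inr_mul_inr]
    · simp
  exact this ha

noncomputable def psi (n : ℕ+) : (A ⧸ sqIdeal) ⊗[F2] A →ₐ[F2] DA :=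
  Algebra.TensorProduct.lift (Ideal.Quotient.liftₐ sqIdeal (theta n) (theta_vanish n))
    (TrivSqZeroExt.inlAlgHom F2 A A) (fun _ _ => Commute.all _ _)

noncomputable def dd (n : ℕ+) : Derivation F2 A A :=
  mkDerivation F2 fun m => if n ≤ m then sw ((m : ℕ) - n) else 0

lemma sw_coe (m : ℕ+) : sw (m : ℕ) = X m := by
  rw [sw, dif_pos m.pos]
  rfl

lemma theta_sw (n : ℕ+) (i : ℕ) : theta n (sw i) =
    if i = 0 then 1 else if i = (n : ℕ) then TrivSqZeroExt.inr 1 else 0 := by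
  by_cases h : 0 < i
  · lift i to ℕ+ using h
    rw [sw_coe, if_neg i.ne_zero, theta, aeval_X]
    simp only [PNat.coe_inj]
  · have : i = 0 := by omega
    simp [this, sw]

lemma psi_X (n m : ℕ+) :
    psi n (Algebra.TensorProduct.map qmap (AlgHom.id F2 A) (whitneyComul (X m))) =
      TrivSqZeroExt.inl (X m) + TrivSqZeroExt.inr (dd n (X m)) := by
  have key : ∀ i j : ℕ, psi n (Algebra.TensorProduct.map qmap (AlgHom.id F2 A)
      (sw i ⊗ₜ[F2] sw j)) = theta n (sw i) * TrivSqZeroExt.inl (sw j) := by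
    intro i j
    rfl
  simp only [whitneyComul, aeval_X, map_sum, key]
  rw [Finset.sum_range_succ']
  simp only [theta_sw, dd, mkDerivation_X]
  rw [add_comm]
  congr 1
  · simp [sw_coe]
  · simp only [Nat.add_eq_zero_iff, one_ne_zero, and_false, if_false, ite_mul, zero_mul]
    split_ifs with h
    · have hn := n.pos
      have h' : (n : ℕ) ≤ m := h
      rw [Finset.sum_eq_single ((n : ℕ) - 1)]
      · rw [if_pos (by omega), TrivSqZeroExt.inr_mul_inl]
        rw [show (n : ℕ) - 1 + 1 = n by omega]
        simp
      · intro b _ hb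
        rw [if_neg (by omega)]
      · intro hb
        exact absurd (Finset.mem_range.2 (by omega)) hb
    · have h' : ¬ (n : ℕ) ≤ m := h
      rw [TrivSqZeroExt.inr_zero]
      refine Finset.sum_eq_zero fun i hi => ?_
      have := Finset.mem_range.1 hi
      rw [if_neg (by omega)]

lemma psi_all (n : ℕ+) (c : A) :
    psi n (Algebra.TensorProduct.map qmap (AlgHom.id F2 A) (whitneyComul c)) =
      TrivSqZeroExt.inl c + TrivSqZeroExt.inr (dd n c) := by
  induction c using MvPolynomial.induction_on with
  | C a =>
    rw [derivation_C, TrivSqZeroExt.inr_zero, add_zero, ← algebraMap_eq]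
    simp only [AlgHom.commutes]
    rfl
  | add p q hp hq =>
    simp only [map_add, hp, hq, TrivSqZeroExt.inl_add, TrivSqZeroExt.inr_add]
    abel
  | mul_X p i hp =>
    rw [map_mul, map_mul, map_mul, hp, psi_X, Derivation.leibniz]
    ext <;> simp [mul_comm]

lemma dd_eq_zero (n : ℕ+) (c : A)
    (h : (Algebra.TensorProduct.map qmap (AlgHom.id F2 A)) (whitneyComul c)
      = (1 : A ⧸ sqIdeal) ⊗ₜ[F2] c) : dd n c = 0 := by
  have h1 := psi_all n c
  rw [h] at h1
  have h2 : psi n ((1 : A ⧸ sqIdeal) ⊗ₜ[F2] c) = TrivSqZeroExt.inl c := by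
    simp [psi]
  rw [h2] at h1
  simpa using (congrArg TrivSqZeroExt.snd h1).symm

lemma derivation_sum_apply (s : Finset ℕ+) (f : ℕ+ → Derivation F2 A A) (c : A) :
    (∑ i ∈ s, f i) c = ∑ i ∈ s, f i c := by
  classical
  induction s using Finset.induction_on with
  | empty => simp
  | insert a s ha ih =>
    rw [Finset.sum_insert ha, Finset.sum_insert ha, Derivation.add_apply, ih]

lemma dd_sum (n : ℕ+) (c : A) :
    dd n c = ∑ i ∈ c.vars, (dd n (X i)) * pderiv i c := by
  classical
  have : dd n c = (∑ i ∈ c.vars, (dd n (X i)) • pderiv i : Derivation F2 A A) c := by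
    refine derivation_eq_of_forall_mem_vars fun j hj => ?_
    rw [derivation_sum_apply, Finset.sum_eq_single j]
    · simp
    · intro b _ hb
      simp [pderiv_X_of_ne hb.symm]
    · exact fun h => absurd hj h
  rw [this, derivation_sum_apply]
  rfl

lemma pderiv_zero (c : A) (h : ∀ n, dd n c = 0) (m : ℕ+) : pderiv m c = 0 := by
  classical
  by_contra hm
  let S := c.vars.filter fun i => pderiv i c ≠ 0
  have hmS : ∀ i, pderiv i c ≠ 0 → i ∈ S := fun i hi =>
    Finset.mem_filter.2 ⟨by
      by_contra hv; exact hi (pderiv_eq_zero_of_notMem_vars hv), hi⟩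
  have hne : S.Nonempty := ⟨m, hmS m hm⟩
  obtain ⟨hv, hM⟩ := Finset.mem_filter.1 (S.max'_mem hne)
  set M := S.max' hne
  have h0 := h M
  rw [dd_sum, Finset.sum_eq_single M] at h0
  · apply hM
    simpa [dd, mkDerivation_X, sw] using h0
  · intro b _ hb
    by_cases hb0 : pderiv b c = 0
    · simp [hb0]
    · have hle : b ≤ M := S.le_max' b (hmS b hb0)
      have : ¬ M ≤ b := fun h' => hb (le_antisymm hle h')
      simp [dd, mkDerivation_X, this]
  · exact fun h => absurd hv h

lemma mem_of_pderiv (c : A) (h : ∀ m, pderiv m c = 0) :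
    c ∈ Algebra.adjoin F2 (Set.range fun n : ℕ+ => (X n : A) ^ 2) := by
  classical
  rw [c.as_sum]
  refine Subalgebra.sum_mem _ fun s hs => ?_
  have hev : ∀ i, Even (s i) := by
    intro i
    by_contra ho
    rw [Nat.not_even_iff_odd] at ho
    have hc := coeff_pderiv (i := i) c (s - Finsupp.single i 1)
    have hle : Finsupp.single i 1 ≤ s := by
      rw [Finsupp.single_le_iff]; exact ho.pos
    rw [h i, tsub_add_cancel_of_le hle, coeff_zero] at hc
    have h1 : (((s - Finsupp.single i 1 : ℕ+ →₀ ℕ) i : ℕ) : F2) + 1 = 1 := by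
      have : (s - Finsupp.single i 1 : ℕ+ →₀ ℕ) i + 1 = s i := by
        have := ho.pos
        simp; omega
      rw [← Nat.cast_succ, Nat.succ_eq_add_one, this]
      exact ZMod.natCast_eq_one_iff_odd.2 ho
    rw [h1, mul_one] at hc
    exact mem_support_iff.1 hs hc.symm
  rw [monomial_eq, ← algebraMap_eq]
  refine Subalgebra.mul_mem _ (Subalgebra.algebraMap_mem _ _) ?_
  refine Subalgebra.prod_mem _ fun i _ => ?_
  obtain ⟨k, hk⟩ := hev i
  dsimp only
  rw [hk, ← two_mul, pow_mul]
  exact Subalgebra.pow_mem _ (Algebra.subset_adjoin (Set.mem_range_self i)) _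

lemma sq_sum_two {R : Type*} [CommSemiring R] (h2 : (2 : R) = 0) (s : Finset ℕ) (f : ℕ → R) :
    (∑ i ∈ s, f i) ^ 2 = ∑ i ∈ s, f i ^ 2 := by
  classical
  induction s using Finset.induction_on with
  | empty => simp
  | insert a s ha ih =>
    rw [Finset.sum_insert ha, Finset.sum_insert ha, ← ih]
    rw [add_sq, h2, zero_mul, zero_mul, add_zero]

lemma comul_sq (n : ℕ+) : whitneyComul (X n ^ 2) =
    ∑ i ∈ Finset.range ((n : ℕ) + 1), (sw i ^ 2) ⊗ₜ[F2] (sw ((n : ℕ) - i) ^ 2) := by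
  have h2 : (2 : A ⊗[F2] A) = 0 := by
    have h := map_ofNat whitneyComul 2
    have h0 : (OfNat.ofNat 2 : A) = 0 := CharTwo.two_eq_zero
    rw [h0, map_zero] at h
    exact h.symm
  rw [map_pow, whitneyComul, aeval_X, sq_sum_two h2]
  simp only [Algebra.TensorProduct.tmul_pow]

lemma forward_X (n : ℕ+) :
    (Algebra.TensorProduct.map qmap (AlgHom.id F2 A)) (whitneyComul (X n ^ 2))
      = (1 : A ⧸ sqIdeal) ⊗ₜ[F2] (X n ^ 2) := by
  rw [comul_sq]
  simp only [map_sum, Algebra.TensorProduct.map_tmul, AlgHom.id_apply]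
  rw [Finset.sum_range_succ', Finset.sum_eq_zero, zero_add]
  · rw [Nat.sub_zero, sw_coe]
    simp [sw]
  · intro i _
    have : qmap (sw (i + 1) ^ 2) = 0 := by
      refine Ideal.Quotient.eq_zero_iff_mem.2 (Ideal.subset_span ⟨⟨i + 1, i.succ_pos⟩, ?_⟩)
      simp [sw]
    rw [this, TensorProduct.zero_tmul]

theorem complexifiable_iff_in_subring_of_squares (c : A) :
    c ∈ Algebra.adjoin F2 (Set.range fun n : ℕ+ => (X n : A) ^ 2) ↔
    (Algebra.TensorProduct.map qmap (AlgHom.id F2 A)) (whitneyComul c)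
      = (1 : A ⧸ sqIdeal) ⊗ₜ[F2] c := by
  constructor
  · intro hc
    have hle : Algebra.adjoin F2 (Set.range fun n : ℕ+ => (X n : A) ^ 2) ≤
        AlgHom.equalizer ((Algebra.TensorProduct.map qmap (AlgHom.id F2 A)).comp whitneyComul)
          (Algebra.TensorProduct.includeRight : A →ₐ[F2] (A ⧸ sqIdeal) ⊗[F2] A) := by
      refine Algebra.adjoin_le ?_
      rintro _ ⟨n, rfl⟩
      exact forward_X n
    exact hle hc
  · intro h
    exact mem_of_pderiv c (pderiv_zero c fun n => dd_eq_zero n c h)
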